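/- There exists C > 0 such that for every τ ∈ (0,1] and every sequence (u_n)_{n∈ℤ} of functions in L^{4/3}(𝕋) with only finitely many nonzero terms, ‖(Π_τ u_n)_{n∈ℤ}‖_{X^{0,-3/8}_τ} ≤ C ‖(u_n)‖_{ℓ^{4/3}_τ L^{4/3}}. -/

import Mathlib

noncomputable section

open MeasureTheory Complex Filter Topology AddCircle
open scoped ENNReal

abbrev Torus := AddCircle (2 * Real.pi)

instance : Fact (0 < 2 * Real.pi) := ⟨by positivity⟩

/-- Japanese bracket `⟨x⟩ = (1+|x|²)^{1/2}`. -/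
def jbr (x : ℝ) : ℝ := Real.sqrt (1 + x ^ 2)

/-- The Sobolev `H^s` norm on the torus, via Fourier coefficients. -/
def hsNorm (s : ℝ) (f : Torus → ℂ) : ℝ :=
  Real.sqrt (∑' k : ℤ, jbr k ^ (2 * s) * ‖fourierCoeff f k‖ ^ 2)

/-- Membership in `H^s(𝕋)` (as a function): square integrable with finite `H^s` norm. -/
def InHs (s : ℝ) (f : Torus → ℂ) : Prop :=
  MemLp f 2 haarAddCircle ∧ Summable fun k : ℤ => jbr k ^ (2 * s) * ‖fourierCoeff f k‖ ^ 2

/-- The frequency cutoff `Π_τ`, keeping the Fourier modes `|k| ≤ τ^{-1/2}`. -/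
def projC (τ : ℝ) (f : Torus → ℂ) : Torus → ℂ := fun x =>
  ∑' k : ℤ, if |(k : ℝ)| ≤ τ ^ (-(1 : ℝ) / 2) then fourierCoeff f k * fourier k x else 0

/-- The free Schrödinger group `e^{it∂_x²}`, given by the Fourier multiplier `e^{-itk²}`. -/
def schrod (t : ℝ) (f : Torus → ℂ) : Torus → ℂ := fun x =>
  ∑' k : ℤ, Complex.exp (-Complex.I * t * (k : ℂ) ^ 2) * fourierCoeff f k * fourier k x

/-- Continuity on `I` with values in `L²(𝕋)`. -/
def ContL2On (I : Set ℝ) (u : ℝ → Torus → ℂ) : Prop :=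
  (∀ t ∈ I, MemLp (u t) 2 haarAddCircle) ∧
  ∀ t ∈ I, Tendsto (fun t' => eLpNorm (u t' - u t) 2 haarAddCircle) (nhdsWithin t I) (nhds 0)

/-- Continuity on `I` with values in `H^s(𝕋)`. -/
def ContHsOn (s : ℝ) (I : Set ℝ) (u : ℝ → Torus → ℂ) : Prop :=
  (∀ t ∈ I, InHs s (u t)) ∧
  ∀ t ∈ I, Tendsto (fun t' => hsNorm s (u t' - u t)) (nhdsWithin t I) (nhds 0)

/-- The cubic nonlinearity `|f|² f` (pointwise). -/
def cubic (f : Torus → ℂ) : Torus → ℂ := fun x => (‖f x‖ : ℂ) ^ 2 * f x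

/-- The filtered cubic nonlinearity `Π_τ(|Π_τ f|² Π_τ f)`. -/
def projCubic (τ : ℝ) (f : Torus → ℂ) : Torus → ℂ := projC τ (cubic (projC τ f))

/-- `v` is the (global-in-time) mild solution of the projected equation
`i∂_t v = -∂_x² v - μ Π_τ(|Π_τ v|² Π_τ v)`, `v(0) = Π_τ u₀`. -/
def IsProjSolution (μ τ : ℝ) (u₀ : Torus → ℂ) (v : ℝ → Torus → ℂ) : Prop :=
  ContL2On Set.univ v ∧
  ∀ t : ℝ, ∀ x : Torus,
    v t x = schrod t (projC τ u₀) x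
      + Complex.I * μ * ∫ s in (0 : ℝ)..t, schrod (t - s) (projCubic τ (v s)) x

/-- The cubic NLS `i∂_t u = -∂_x² u - μ |u|² u` holds in the sense of space-time
distributions on `(0,T) × 𝕋` (tested against `ψ(t) e^{-ikx}`). -/
def DistribSolOn (μ T : ℝ) (u : ℝ → Torus → ℂ) : Prop :=
  ∀ k : ℤ, ∀ ψ : ℝ → ℂ, ContDiff ℝ (⊤ : ℕ∞) ψ → tsupport ψ ⊆ Set.Ioo 0 T →
    -Complex.I * ∫ t : ℝ, deriv ψ t * fourierCoeff (u t) k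
      = (k : ℂ) ^ 2 * ∫ t : ℝ, ψ t * fourierCoeff (u t) k
        - (μ : ℂ) * ∫ t : ℝ, ψ t * fourierCoeff (cubic (u t)) k

/-- `u ∈ L⁴((0,T) × 𝕋)`. -/
def SpaceTimeL4 (T : ℝ) (u : ℝ → Torus → ℂ) : Prop :=
  MemLp (fun p : ℝ × Torus => u p.1 p.2) 4
    ((volume.restrict (Set.Ioo 0 T)).prod haarAddCircle)

/-- Space-time Fourier transform `ṽ(σ,k)` of `v : ℝ × 𝕋 → ℂ`. -/
def stFT (v : ℝ → Torus → ℂ) (σ : ℝ) (k : ℤ) : ℂ :=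
  ∫ t : ℝ, Complex.exp (-Complex.I * σ * t) * fourierCoeff (v t) k

/-- The (continuous) Bourgain `X^{s,b}` norm, valued in `ℝ≥0∞`. -/
def XcNorm (s b : ℝ) (v : ℝ → Torus → ℂ) : ℝ≥0∞ :=
  (∫⁻ σ : ℝ, ∑' k : ℤ,
      ENNReal.ofReal ((1 + |(k : ℝ)|) ^ (2 * s) * (1 + |σ + (k : ℝ) ^ 2|) ^ (2 * b)
        * ‖stFT v σ k‖ ^ 2)) ^ (1 / 2 : ℝ)

/-- The restriction norm `‖u‖_{X^{s,b}(T)}` is bounded by `M`: some extension of `u`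
from `(0,T)` has `X^{s,b}` norm at most `M`. -/
def XresBounded (s b T : ℝ) (u : ℝ → Torus → ℂ) (M : ℝ≥0∞) : Prop :=
  ∃ v : ℝ → Torus → ℂ, (∀ t ∈ Set.Ioo 0 T, v t = u t) ∧ XcNorm s b v ≤ M

/-- `u` is a Bourgain-class solution of cubic NLS on `[0,T]` with datum `u₀`. -/
def IsNLSSolution (μ T : ℝ) (u₀ : Torus → ℂ) (u : ℝ → Torus → ℂ) : Prop :=
  ContL2On (Set.Icc 0 T) u ∧ SpaceTimeL4 T u ∧
  (∃ b ∈ Set.Ioo (1 / 2 : ℝ) (5 / 8 : ℝ), ∃ v : ℝ → Torus → ℂ,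
      (∀ t ∈ Set.Ioo 0 T, v t = u t) ∧ XcNorm 0 b v < ⊤) ∧
  u 0 = u₀ ∧ DistribSolOn μ T u

/-- One step of the pointwise nonlinear flow `e^{iμτ|Π_τ f|²} Π_τ f`. -/
def lieFlow (μ τ : ℝ) (f : Torus → ℂ) : Torus → ℂ := fun x =>
  Complex.exp (Complex.I * μ * τ * (‖projC τ f x‖ : ℂ) ^ 2) * projC τ f x

/-- The filtered Lie splitting scheme `u⁰ = Π_τ u₀`,
`u^{n+1} = e^{iτ∂_x²} Π_τ (e^{iμτ|Π_τ uⁿ|²} Π_τ uⁿ)`. -/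
def lieScheme (μ τ : ℝ) (u₀ : Torus → ℂ) : ℕ → Torus → ℂ
  | 0 => projC τ u₀
  | n + 1 => schrod τ (projC τ (lieFlow μ τ (lieScheme μ τ u₀ n)))

/-- `d_τ(σ) = (e^{iτσ}-1)/τ`. -/
def dtau (τ σ : ℝ) : ℂ := (Complex.exp (Complex.I * τ * σ) - 1) / τ

/-- The discrete Bourgain `X^{s,b}_τ` norm of a sequence of functions on the torus. -/
def XdNorm (τ s b : ℝ) (u : ℤ → Torus → ℂ) : ℝ :=
  Real.sqrt (∫ σ in Set.Ioc (-(Real.pi / τ)) (Real.pi / τ),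
    ∑' k : ℤ, jbr k ^ (2 * s) * jbr ‖dtau τ (σ - (k : ℝ) ^ 2)‖ ^ (2 * b) *
      ‖(τ : ℂ) * ∑' m : ℤ, fourierCoeff (u m) k * Complex.exp (Complex.I * m * τ * σ)‖ ^ 2)

/-- The discrete space-time Lebesgue norm `‖(u_n)‖_{ℓ^p_τ L^q}`. -/
def lpLqNorm (τ p q : ℝ) (u : ℤ → Torus → ℂ) : ℝ :=
  (τ * ∑' n : ℤ, (eLpNorm (u n) (ENNReal.ofReal q) haarAddCircle).toReal ^ p) ^ (1 / p)


local notation "μT" => (haarAddCircle : Measure Torus)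

lemma aux_norm_le (y : Torus) : ‖y‖ ≤ Real.pi / 2 * ‖(fourier 1 y : ℂ) - 1‖ := by
  have hpi := Real.pi_pos
  obtain ⟨x, hx, rfl⟩ : ∃ x ∈ Set.Ioc (-Real.pi) (-Real.pi + 2 * Real.pi), (x : Torus) = y := by
    have := AddCircle.coe_image_Ioc_eq (2 * Real.pi) (-Real.pi)
    have h2 : y ∈ ((↑) : ℝ → Torus) '' Set.Ioc (-Real.pi) (-Real.pi + 2 * Real.pi) := by
      rw [this]; trivial
    obtain ⟨x, h, h'⟩ := h2
    exact ⟨x, h, h'⟩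
  have hab : |x| ≤ Real.pi := abs_le.2 ⟨hx.1.le, by linarith [hx.2]⟩
  have h1 : ‖(x : Torus)‖ = |x| := by
    rw [AddCircle.norm_coe_eq_abs_iff]
    · rw [abs_of_pos (by positivity : 0 < 2 * Real.pi)]; linarith
    · positivity
  have h2 : (fourier 1 (x : Torus) : ℂ) = Complex.exp (Complex.I * x) := by
    rw [fourier_coe_apply]
    congr 1
    push_cast
    have : (Real.pi : ℂ) ≠ 0 := by exact_mod_cast hpi.ne'
    field_simp
  rw [h1, h2, Complex.norm_exp_I_mul_ofReal_sub_one]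
  have h3 := Real.mul_abs_le_abs_sin (x := x / 2) (by rw [abs_div, abs_two]; linarith)
  rw [norm_mul, Real.norm_eq_abs, Real.norm_eq_abs, abs_two]
  rw [abs_div, abs_two] at h3
  have h4 : Real.pi / 2 * (2 / Real.pi * (|x| / 2)) ≤ Real.pi / 2 * |Real.sin (x / 2)| := by gcongr
  have h5 : Real.pi / 2 * (2 / Real.pi * (|x| / 2)) = |x| / 2 := by field_simp
  linarith

lemma aux_ball (a : Torus) (r : ℝ) (hr : 0 ≤ r) : (μT).real {θ | ‖θ - a‖ ≤ r} ≤ r / Real.pi := by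
  have hpi := Real.pi_pos
  have h1 : {θ : Torus | ‖θ - a‖ ≤ r} = Metric.closedBall a r := by
    ext; simp [dist_eq_norm]
  have h2 := AddCircle.volume_closedBall (T := 2 * Real.pi) (x := a) r
  rw [volume_eq_smul_haarAddCircle] at h2
  have h3 := congrArg ENNReal.toReal h2
  rw [Measure.smul_apply, smul_eq_mul, ENNReal.toReal_mul,
    ENNReal.toReal_ofReal (by positivity), ENNReal.toReal_ofReal (by positivity)] at h3
  have h4 : 2 * Real.pi * (μT).real (Metric.closedBall a r) ≤ 2 * r := by
    rw [Measure.real, h3]; exact min_le_right _ _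
  rw [h1, le_div_iff₀ hpi]
  linarith

lemma aux_card_half (P : Finset ℤ) (R : ℝ) (hR : 0 ≤ R)
    (h : ∀ p ∈ P, ∀ q ∈ P, ((p : ℝ) - q) ≤ R) : (P.card : ℝ) ≤ R + 1 := by
  rcases P.eq_empty_or_nonempty with rfl | hne
  · simp; linarith
  have hsub : P ⊆ Finset.Icc (P.min' hne) (P.min' hne + ⌊R⌋) := by
    intro p hp
    rw [Finset.mem_Icc]
    refine ⟨P.min'_le p hp, ?_⟩
    have := h p hp _ (P.min'_mem hne)
    have h2 : p - P.min' hne ≤ ⌊R⌋ := by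
      rw [Int.le_floor]; push_cast; exact this
    linarith
  have h1 := Finset.card_le_card hsub
  rw [Int.card_Icc] at h1
  have h0 : 0 ≤ ⌊R⌋ := Int.floor_nonneg.2 hR
  have h2 : (P.card : ℤ) ≤ ⌊R⌋ + 1 := by omega
  have h3 : (P.card : ℝ) ≤ (⌊R⌋ : ℝ) + 1 := by exact_mod_cast h2
  linarith [Int.floor_le R]

lemma aux_card (P : Finset ℤ) (R : ℝ) (hR : 0 ≤ R)
    (h : ∀ p ∈ P, ∀ q ∈ P, ((p : ℝ) ^ 2 - (q : ℝ) ^ 2) ≤ R ^ 2) : (P.card : ℝ) ≤ 2 * (R + 1) := by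
  have h1 := aux_card_half (P.filter (fun p => 0 ≤ p)) R hR (by
    intro p hp q hq
    rw [Finset.mem_filter] at hp hq
    have := h p hp.1 q hq.1
    have a : (0 : ℝ) ≤ p := by exact_mod_cast hp.2
    have b : (0 : ℝ) ≤ q := by exact_mod_cast hq.2
    by_contra hc
    push Not at hc
    nlinarith)
  have h2 := aux_card_half (P.filter (fun p => ¬ 0 ≤ p)) R hR (by
    intro p hp q hq
    rw [Finset.mem_filter] at hp hq
    have := h q hq.1 p hp.1
    have a : (p : ℝ) < 0 := by exact_mod_cast (not_le.1 hp.2)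
    have b : (q : ℝ) < 0 := by exact_mod_cast (not_le.1 hq.2)
    by_contra hc
    push Not at hc
    nlinarith)
  have h3 := Finset.card_filter_add_card_filter_not (s := P) (fun p : ℤ => 0 ≤ p)
  have h4 : (P.card : ℝ) = ((P.filter (fun p => 0 ≤ p)).card : ℝ) +
    ((P.filter (fun p => ¬ 0 ≤ p)).card : ℝ) := by exact_mod_cast h3.symm
  linarith

/-- bounded measurable -/
def BM (f : Torus → ℂ) : Prop := Measurable f ∧ ∃ B : ℝ, ∀ x, ‖f x‖ ≤ B

lemma BM.memLp {f : Torus → ℂ} (hf : BM f) (p : ℝ≥0∞) : MemLp f p μT := by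
  obtain ⟨h, B, hB⟩ := hf
  exact MemLp.of_bound h.aestronglyMeasurable B (ae_of_all _ hB)

lemma BM.integrable {f : Torus → ℂ} (hf : BM f) : Integrable f μT :=
  memLp_one_iff_integrable.1 (hf.memLp 1)

lemma BM.of_cont {f : Torus → ℂ} (hf : Continuous f) : BM f := by
  refine ⟨hf.measurable, ?_⟩
  obtain ⟨B, hB⟩ := (isCompact_univ (X := Torus)).exists_bound_of_continuousOn hf.continuousOn
  exact ⟨B, fun x => hB x trivial⟩

lemma BM.mul {f g : Torus → ℂ} (hf : BM f) (hg : BM g) : BM (fun x => f x * g x) := by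
  obtain ⟨h, B, hB⟩ := hf
  obtain ⟨h', B', hB'⟩ := hg
  refine ⟨h.mul h', B * B', fun x => ?_⟩
  rw [norm_mul]
  exact mul_le_mul (hB x) (hB' x) (norm_nonneg _) ((norm_nonneg _).trans (hB x))

lemma aux_hasSum {f : Torus → ℂ} (hf : MemLp f 2 μT) :
    HasSum (fun i => ‖fourierCoeff f i‖ ^ 2) (∫ t, ‖f t‖ ^ 2 ∂μT) := by
  have h := hasSum_sq_fourierCoeff (hf.toLp f)
  have e : ∀ i, fourierCoeff (hf.toLp f) i = fourierCoeff f i := fun i =>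
    congrFun (fourierCoeff_congr_ae hf.coeFn_toLp) i
  have e2 : ∫ t, ‖(hf.toLp f) t‖ ^ 2 ∂μT = ∫ t, ‖f t‖ ^ 2 ∂μT := by
    apply integral_congr_ae
    filter_upwards [hf.coeFn_toLp] with t ht
    rw [ht]
  simpa only [e, e2] using h

lemma aux_coeff_poly (L : Finset ℤ) (c : ℤ → ℂ) (n : ℤ) :
    fourierCoeff (fun x : Torus => ∑ k ∈ L, c k * (fourier k x : ℂ)) n = if n ∈ L then c n else 0 := by
  have h : (fun x : Torus => ∑ k ∈ L, c k * (fourier k x : ℂ)) =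
      ∑ k ∈ L, fun x : Torus => c k * (fourier k x : ℂ) := by ext; simp
  rw [h, fourierCoeff.sum]
  · have : ∀ k ∈ L, fourierCoeff (fun x : Torus => c k * (fourier k x : ℂ)) n =
        if n = k then c k else 0 := by
      intro k _
      rw [fourierCoeff.const_mul]
      have := congrFun (fourierCoeff_fourier (T := 2 * Real.pi) k) n
      simp only [Pi.single_apply] at this
      rw [this]; split_ifs <;> simp
    rw [Finset.sum_apply, Finset.sum_congr rfl this]
    simp
  · intro k _
    exact (BM.of_cont (by fun_prop)).integrable

lemma aux_parseval (L : Finset ℤ) (c : ℤ → ℂ) :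
    ∫ x : Torus, ‖∑ k ∈ L, c k * (fourier k x : ℂ)‖ ^ 2 ∂μT = ∑ k ∈ L, ‖c k‖ ^ 2 := by
  have h := aux_hasSum (f := fun x : Torus => ∑ k ∈ L, c k * (fourier k x : ℂ))
    ((BM.of_cont (by fun_prop)).memLp 2)
  rw [← h.tsum_eq, tsum_eq_sum (s := L)]
  · apply Finset.sum_congr rfl
    intro k hk
    rw [aux_coeff_poly, if_pos hk]
  · intro k hk
    rw [aux_coeff_poly, if_neg hk]; simp

lemma aux_bessel {f : Torus → ℂ} (hf : BM f) (S : Finset ℤ) :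
    ∑ n ∈ S, ‖fourierCoeff f n‖ ^ 2 ≤ ∫ t, ‖f t‖ ^ 2 ∂μT := by
  have h := aux_hasSum (hf.memLp 2)
  rw [← h.tsum_eq]
  exact h.summable.sum_le_tsum _ (fun _ _ => by positivity)

lemma BM.int_sq {f : Torus → ℂ} (hf : BM f) : Integrable (fun x => ‖f x‖ ^ 2) μT :=
  (memLp_two_iff_integrable_sq_norm hf.1.aestronglyMeasurable).1 (hf.memLp 2)

lemma aux_cs {h : Torus → ℂ} (hh : BM h) :
    ‖∫ x, h x ∂μT‖ ^ 2 ≤ (μT).real {x | h x ≠ 0} * ∫ x, ‖h x‖ ^ 2 ∂μT := by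
  have hA : MeasurableSet {x | h x ≠ 0} := (measurableSet_singleton (0:ℂ)).compl.preimage hh.1
  have i1 : Integrable (fun x => ‖h x‖) μT := hh.integrable.norm
  have i2 := hh.int_sq
  have i3 : Integrable ({x | h x ≠ 0}.indicator (fun _ => (1:ℝ))) μT :=
    (integrable_const _).indicator hA
  have key : ∀ t : ℝ, 0 ≤ (μT).real {x | h x ≠ 0} * (t * t) + (-2 * ∫ x, ‖h x‖ ∂μT) * t
      + ∫ x, ‖h x‖ ^ 2 ∂μT := by
    intro t
    have e : ∫ x, (‖h x‖ - t * {x | h x ≠ 0}.indicator (fun _ => (1:ℝ)) x) ^ 2 ∂μT =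
        (μT).real {x | h x ≠ 0} * (t * t) + (-2 * ∫ x, ‖h x‖ ∂μT) * t
      + ∫ x, ‖h x‖ ^ 2 ∂μT := by
      have : ∀ x, (‖h x‖ - t * {x | h x ≠ 0}.indicator (fun _ => (1:ℝ)) x) ^ 2 =
          (t * t) * {x | h x ≠ 0}.indicator (fun _ => (1:ℝ)) x + (-2 * t) * ‖h x‖ + ‖h x‖ ^ 2 := by
        intro x
        by_cases hx : h x = 0
        · simp [hx]
        · simp [Set.indicator, hx]; ring
      simp_rw [this]
      have i4 : Integrable (fun x => (t * t) * {x | h x ≠ 0}.indicator (fun _ => (1:ℝ)) x +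
          (-2 * t) * ‖h x‖) μT := (i3.const_mul _).add (i1.const_mul _)
      have i5 : ∫ x, {x | h x ≠ 0}.indicator (fun _ => (1:ℝ)) x ∂μT = (μT).real {x | h x ≠ 0} :=
        integral_indicator_one hA
      rw [integral_add i4 i2,
        integral_add (i3.const_mul _) (i1.const_mul _), integral_const_mul, integral_const_mul, i5]
      ring
    rw [← e]
    exact integral_nonneg (fun x => by positivity)
  have d := discrim_le_zero key
  rw [discrim] at d
  have h1 : ‖∫ x, h x ∂μT‖ ≤ ∫ x, ‖h x‖ ∂μT := norm_integral_le_integral_norm _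
  have h2 : ‖∫ x, h x ∂μT‖ ^ 2 ≤ (∫ x, ‖h x‖ ∂μT) ^ 2 := by gcongr
  nlinarith

/-- convolution -/
def cv (f g : Torus → ℂ) (θ : Torus) : ℂ := ∫ s, f s * g (θ - s) ∂μT

lemma BM.shift {g : Torus → ℂ} (hg : BM g) (θ : Torus) : BM (fun s => g (θ - s)) :=
  ⟨hg.1.comp (by fun_prop), hg.2.imp fun _ h x => h _⟩

lemma BM.sum {ι : Type*} (s : Finset ι) {f : ι → Torus → ℂ} (hf : ∀ i ∈ s, BM (f i)) :
    BM (fun x => ∑ i ∈ s, f i x) := by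
  classical
  induction s using Finset.induction_on with
  | empty => exact ⟨by simp, 0, by simp⟩
  | insert a s ha ih =>
    obtain ⟨h, B, hB⟩ := hf a (by simp)
    obtain ⟨h', B', hB'⟩ := ih (fun i hi => hf i (by simp [hi]))
    simp_rw [Finset.sum_insert ha]
    exact ⟨h.add h', B + B', fun x => (norm_add_le _ _).trans (add_le_add (hB x) (hB' x))⟩

lemma aux_int_prod {f : Torus × Torus → ℂ} (hf : Measurable f) (B : ℝ) (hB : ∀ x, ‖f x‖ ≤ B) :
    Integrable f ((μT).prod μT) :=
  Integrable.of_bound hf.aestronglyMeasurable B (ae_of_all _ hB)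

lemma BM.cv {f g : Torus → ℂ} (hf : BM f) (hg : BM g) : BM (cv f g) := by
  have hm : Measurable (fun p : Torus × Torus => f p.2 * g (p.1 - p.2)) :=
    (hf.1.comp measurable_snd).mul (hg.1.comp (by fun_prop))
  refine ⟨?_, ?_⟩
  · exact (hm.stronglyMeasurable.integral_prod_right (ν := μT)).measurable
  · obtain ⟨_, B, hB⟩ := hf
    obtain ⟨_, B', hB'⟩ := hg
    refine ⟨B * B', fun θ => ?_⟩
    have := norm_integral_le_of_norm_le_const (μ := μT) (f := fun s => f s * g (θ - s)) (C := B * B')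
      (ae_of_all _ fun s => by
        rw [norm_mul]
        exact mul_le_mul (hB s) (hB' _) (norm_nonneg _) ((norm_nonneg _).trans (hB s)))
    simpa [_root_.cv] using this

lemma aux_coeff_cv {f g : Torus → ℂ} (hf : BM f) (hg : BM g) (n : ℤ) :
    fourierCoeff (cv f g) n = fourierCoeff f n * fourierCoeff g n := by
  have hF := BM.of_cont (f := fun x : Torus => (fourier (-n) x : ℂ)) (by fun_prop)
  obtain ⟨hf', B, hB⟩ := hf
  obtain ⟨hg', B', hB'⟩ := hg
  obtain ⟨hF', B'', hB''⟩ := hF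
  simp only [fourierCoeff, smul_eq_mul, _root_.cv]
  have e1 : ∀ t : Torus, (fourier (-n) t : ℂ) * ∫ s, f s * g (t - s) ∂μT =
      ∫ s, (fourier (-n) t : ℂ) * (f s * g (t - s)) ∂μT := fun t => (integral_const_mul _ _).symm
  simp_rw [e1]
  rw [integral_integral_swap]
  · have e2 : ∀ s : Torus, ∫ t, (fourier (-n) t : ℂ) * (f s * g (t - s)) ∂μT =
        (fourier (-n) s * f s) * ∫ t, (fourier (-n) t : ℂ) * g t ∂μT := by
      intro s
      rw [← integral_const_mul]
      rw [← integral_sub_right_eq_self (fun t => (fourier (-n) s * f s) *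
        ((fourier (-n) t : ℂ) * g t)) s]
      apply integral_congr_ae (ae_of_all _ fun t => ?_)
      have : (fourier (-n) t : ℂ) = fourier (-n) s * fourier (-n) (t - s) := by
        rw [fourier_apply, fourier_apply, fourier_apply, ← Circle.coe_mul, ← AddCircle.toCircle_add,
          ← smul_add]
        congr 3; abel_nf
      simp only [this]
      ring
    simp_rw [e2]
    rw [integral_mul_const]
  · apply aux_int_prod (B := B'' * (B * B'))
    · apply Measurable.mul (hF'.comp measurable_fst)
      exact (hf'.comp measurable_snd).mul (hg'.comp (by fun_prop))
    · rintro ⟨t, s⟩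
      simp only [Function.uncurry, norm_mul]
      have := norm_nonneg (f s)
      gcongr
      · exact (norm_nonneg _).trans (hB'' t)
      · exact hB'' t
      · exact this.trans (hB s)
      · exact hB s
      · exact hB' _

lemma aux_cv_sq {f g : Torus → ℂ} (hf : BM f) (hg : BM g) :
    ∫ θ, ∫ s, ‖f s * g (θ - s)‖ ^ 2 ∂μT ∂μT = (∫ s, ‖f s‖ ^ 2 ∂μT) * ∫ s, ‖g s‖ ^ 2 ∂μT := by
  obtain ⟨hf', B, hB⟩ := hf
  obtain ⟨hg', B', hB'⟩ := hg
  rw [integral_integral_swap]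
  · have e2 : ∀ s : Torus, ∫ t, ‖f s * g (t - s)‖ ^ 2 ∂μT =
        ‖f s‖ ^ 2 * ∫ t, ‖g t‖ ^ 2 ∂μT := by
      intro s
      rw [← integral_const_mul]
      rw [← integral_sub_right_eq_self (fun t => ‖f s‖ ^ 2 * ‖g t‖ ^ 2) s]
      simp [mul_pow]
    simp_rw [e2]
    rw [integral_mul_const]
  · refine Integrable.of_bound (C := (B * B') ^ 2) ?_ ?_
    · apply Measurable.aestronglyMeasurable
      apply Measurable.pow_const
      apply Measurable.norm
      exact (hf'.comp measurable_snd).mul (hg'.comp (by fun_prop))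
    · refine ae_of_all _ ?_
      rintro ⟨t, s⟩
      simp only [Function.uncurry, norm_mul, norm_pow, norm_norm]
      have := norm_nonneg (f s)
      gcongr
      · exact this.trans (hB s)
      · exact hB s
      · exact hB' _

lemma aux_int_inner {f g : Torus → ℂ} (hf : BM f) (hg : BM g) :
    Integrable (fun θ => ∫ s, ‖f s * g (θ - s)‖ ^ 2 ∂μT) μT := by
  obtain ⟨hf', B, hB⟩ := hf
  obtain ⟨hg', B', hB'⟩ := hg
  refine Integrable.integral_prod_left (f := fun p : Torus × Torus => ‖f p.2 * g (p.1 - p.2)‖ ^ 2) ?_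
  refine Integrable.of_bound (C := (B * B') ^ 2) ?_ ?_
  · apply Measurable.aestronglyMeasurable
    apply Measurable.pow_const
    apply Measurable.norm
    exact (hf'.comp measurable_snd).mul (hg'.comp (by fun_prop))
  · refine ae_of_all _ ?_
    rintro ⟨t, s⟩
    simp only [norm_mul, norm_pow, norm_norm]
    have := norm_nonneg (f s)
    gcongr
    · exact this.trans (hB s)
    · exact hB s
    · exact hB' _

/-- the synthesis map -/
def vv (K : Finset ℤ) (V : ℤ → Torus → ℂ) (n : ℤ) (x : Torus) : ℂ :=
  ∑ k ∈ K, fourierCoeff (V k) n * fourier k x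

lemma aux_Hsq (K : Finset ℤ) (V V' : ℤ → Torus → ℂ) (hV : ∀ k, BM (V k)) (hV' : ∀ k, BM (V' k))
    (B : ℝ) (k : ℤ)
    (hB : ∀ θ, ∑ l ∈ K, (μT).real {s | V l s * V' (k - l) (θ - s) ≠ 0} ≤ B) :
    ∫ θ, ‖∑ l ∈ K, cv (V l) (V' (k - l)) θ‖ ^ 2 ∂μT ≤
      B * ∑ l ∈ K, (∫ s, ‖V l s‖ ^ 2 ∂μT) * ∫ s, ‖V' (k - l) s‖ ^ 2 ∂μT := by
  have h1 : ∀ θ, ‖∑ l ∈ K, cv (V l) (V' (k - l)) θ‖ ^ 2 ≤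
      B * ∑ l ∈ K, ∫ s, ‖V l s * V' (k - l) (θ - s)‖ ^ 2 ∂μT := by
    intro θ
    set m : ℤ → ℝ := fun l => (μT).real {s | V l s * V' (k - l) (θ - s) ≠ 0}
    set I : ℤ → ℝ := fun l => ∫ s, ‖V l s * V' (k - l) (θ - s)‖ ^ 2 ∂μT
    have hm : ∀ l, 0 ≤ m l := fun l => measureReal_nonneg
    have hI : ∀ l, 0 ≤ I l := fun l => integral_nonneg (fun s => by positivity)
    have h2 : ‖∑ l ∈ K, cv (V l) (V' (k - l)) θ‖ ≤ ∑ l ∈ K, √(m l) * √(I l) := by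
      refine (norm_sum_le _ _).trans (Finset.sum_le_sum fun l _ => ?_)
      rw [← Real.sqrt_mul (hm l)]
      apply Real.le_sqrt_of_sq_le
      exact aux_cs ((hV l).mul ((hV' (k - l)).shift θ))
    have h3 := h2.trans (Real.sum_sqrt_mul_sqrt_le K hm hI)
    calc _ ≤ (√(∑ l ∈ K, m l) * √(∑ l ∈ K, I l)) ^ 2 := by gcongr
      _ = (∑ l ∈ K, m l) * (∑ l ∈ K, I l) := by
        rw [mul_pow, Real.sq_sqrt (Finset.sum_nonneg fun l _ => hm l),
          Real.sq_sqrt (Finset.sum_nonneg fun l _ => hI l)]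
      _ ≤ _ := by
        apply mul_le_mul_of_nonneg_right (hB θ) (Finset.sum_nonneg fun l _ => hI l)
  have h4 : ∑ l ∈ K, (∫ s, ‖V l s‖ ^ 2 ∂μT) * ∫ s, ‖V' (k - l) s‖ ^ 2 ∂μT =
      ∫ θ, ∑ l ∈ K, ∫ s, ‖V l s * V' (k - l) (θ - s)‖ ^ 2 ∂μT ∂μT := by
    rw [integral_finsetSum]
    · exact Finset.sum_congr rfl fun l _ => (aux_cv_sq (hV l) (hV' _)).symm
    · exact fun l _ => aux_int_inner (hV l) (hV' _)
  rw [h4, ← integral_const_mul]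
  apply integral_mono
  · exact (BM.sum K fun l _ => (hV l).cv (hV' (k - l))).int_sq
  · exact (integrable_finsetSum _ fun l _ => aux_int_inner (hV l) (hV' _)).const_mul _
  · exact h1

lemma aux_bilin (K S : Finset ℤ) (V V' : ℤ → Torus → ℂ) (hV : ∀ k, BM (V k)) (hV' : ∀ k, BM (V' k))
    (h0 : ∀ k ∉ K, V' k = 0) (B : ℝ)
    (hB : ∀ k θ, ∑ l ∈ K, (μT).real {s | V l s * V' (k - l) (θ - s) ≠ 0} ≤ B) :
    ∑ n ∈ S, ∫ x, ‖vv K V n x * vv K V' n x‖ ^ 2 ∂μT ≤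
      B * (∑ k ∈ K, ∫ s, ‖V k s‖ ^ 2 ∂μT) * (∑ k ∈ K, ∫ s, ‖V' k s‖ ^ 2 ∂μT) := by
  classical
  set L : Finset ℤ := (K ×ˢ K).image (fun p => p.1 + p.2) with hL
  have hz : ∀ k ∉ K, ∀ n, fourierCoeff (V' k) n = 0 := by
    intro k hk n
    rw [h0 k hk]; simp [fourierCoeff]
  have reidx : ∀ (M : Type) [AddCommMonoid M] (l : ℤ), l ∈ K → ∀ F : ℤ → M, (∀ k ∉ K, F k = 0) →
      ∑ k ∈ L, F (k - l) = ∑ k ∈ K, F k := by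
    intro M _ l hl F hF
    have : (K.image (fun j => l + j)) ⊆ L := by
      intro k hk
      rw [Finset.mem_image] at hk
      obtain ⟨j, hj, rfl⟩ := hk
      exact Finset.mem_image.2 ⟨(l, j), by simp [hl, hj], rfl⟩
    rw [← Finset.sum_subset this, Finset.sum_image (by intro a _ b _ h; simpa using h)]
    · exact Finset.sum_congr rfl fun j _ => by simp
    · intro k _ hk
      apply hF
      intro hc
      exact hk (Finset.mem_image.2 ⟨k - l, hc, by ring⟩)
  have e1 : ∀ n x, vv K V n x * vv K V' n x =
      ∑ k ∈ L, fourierCoeff (fun θ => ∑ l ∈ K, cv (V l) (V' (k - l)) θ) n * (fourier k x : ℂ) := by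
    intro n x
    have e2 : ∀ k, fourierCoeff (fun θ => ∑ l ∈ K, cv (V l) (V' (k - l)) θ) n =
        ∑ l ∈ K, fourierCoeff (V l) n * fourierCoeff (V' (k - l)) n := by
      intro k
      have : (fun θ => ∑ l ∈ K, cv (V l) (V' (k - l)) θ) = ∑ l ∈ K, cv (V l) (V' (k - l)) := by
        ext; simp
      rw [this, fourierCoeff.sum _ _ (fun l _ => ((hV l).cv (hV' _)).integrable), Finset.sum_apply]
      exact Finset.sum_congr rfl fun l _ => aux_coeff_cv (hV l) (hV' _) n
    simp_rw [e2, Finset.sum_mul]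
    rw [Finset.sum_comm, vv, vv, Finset.sum_mul]
    apply Finset.sum_congr rfl
    intro l hl
    have := reidx ℂ l hl (fun j => fourierCoeff (V l) n * fourier l x *
      (fourierCoeff (V' j) n * fourier j x)) (fun k hk => by simp [hz k hk])
    rw [Finset.mul_sum, ← this]
    apply Finset.sum_congr rfl
    intro k _
    have : (fourier k x : ℂ) = fourier l x * fourier (k - l) x := by
      rw [← fourier_add]; congr 2; ring
    rw [this]; ring
  simp_rw [e1, aux_parseval]
  rw [Finset.sum_comm]
  calc _ ≤ ∑ k ∈ L, B * ∑ l ∈ K, (∫ s, ‖V l s‖ ^ 2 ∂μT) * ∫ s, ‖V' (k - l) s‖ ^ 2 ∂μT := by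
        apply Finset.sum_le_sum
        intro k _
        exact (aux_bessel (BM.sum K fun l _ => (hV l).cv (hV' (k - l))) S).trans
          (aux_Hsq K V V' hV hV' B k (hB k))
    _ = _ := by
        rw [← Finset.mul_sum, Finset.sum_comm, mul_assoc, Finset.sum_mul]
        congr 1
        apply Finset.sum_congr rfl
        intro l hl
        rw [← Finset.mul_sum, reidx ℝ l hl (fun j => ∫ s, ‖V' j s‖ ^ 2 ∂μT)]
        intro k hk
        simp [h0 k hk]

/-- the weight on the circle -/
def Dt (τ : ℝ) (y : Torus) : ℝ := jbr (‖(fourier 1 y : ℂ) - 1‖ / τ)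

lemma Dt_cont (τ : ℝ) : Continuous (Dt τ) := by
  unfold Dt jbr; fun_prop

lemma Dt_one_le (τ : ℝ) (y : Torus) : 1 ≤ Dt τ y := by
  unfold Dt jbr
  rw [Real.one_le_sqrt]
  nlinarith [sq_nonneg (‖(fourier 1 y : ℂ) - 1‖ / τ)]

/-- dyadic level -/
def lev (τ : ℝ) (y : Torus) : ℕ := Nat.log 2 ⌊Dt τ y⌋₊

lemma lev_meas (τ : ℝ) : Measurable (lev τ) :=
  (measurable_from_top (f := Nat.log 2)).comp (Nat.measurable_floor.comp (Dt_cont τ).measurable)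

lemma lev_le (τ : ℝ) (y : Torus) : (2:ℝ) ^ lev τ y ≤ Dt τ y := by
  have h1 : 1 ≤ ⌊Dt τ y⌋₊ := Nat.le_floor (by simpa using Dt_one_le τ y)
  have h2 : 2 ^ lev τ y ≤ ⌊Dt τ y⌋₊ := Nat.pow_log_le_self 2 (by omega)
  have h3 := (Nat.le_floor_iff (by linarith [Dt_one_le τ y])).1 h2
  exact_mod_cast h3

lemma lt_lev (τ : ℝ) (y : Torus) : Dt τ y < (2:ℝ) ^ (lev τ y + 1) := by
  have h2 : ⌊Dt τ y⌋₊ < 2 ^ (lev τ y + 1) := Nat.lt_pow_succ_log_self (by norm_num) _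
  have h3 := (Nat.floor_lt (by linarith [Dt_one_le τ y])).1 h2
  exact_mod_cast h3

lemma lev_bdd (τ : ℝ) : ∃ J, ∀ y, lev τ y < J := by
  obtain ⟨B, hB⟩ := (isCompact_univ (X := Torus)).exists_bound_of_continuousOn
    (Dt_cont τ).continuousOn
  refine ⟨Nat.log 2 ⌊B⌋₊ + 1, fun y => Nat.lt_succ_of_le ?_⟩
  apply Nat.log_mono_right
  apply Nat.floor_mono
  exact (le_abs_self _).trans (hB y trivial)

lemma lev_norm {τ : ℝ} (hτ : 0 < τ) (y : Torus) : ‖y‖ ≤ Real.pi * τ * 2 ^ lev τ y := by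
  have h1 := aux_norm_le y
  have h2 := lt_lev τ y
  have h3 : ‖(fourier 1 y : ℂ) - 1‖ / τ ≤ Dt τ y := by
    unfold Dt jbr
    apply Real.le_sqrt_of_sq_le
    linarith
  have h4 : ‖(fourier 1 y : ℂ) - 1‖ ≤ 2 ^ (lev τ y + 1) * τ := by
    rw [← div_le_iff₀ hτ]; linarith
  calc ‖y‖ ≤ _ := h1
    _ ≤ Real.pi / 2 * (2 ^ (lev τ y + 1) * τ) := by gcongr
    _ = _ := by rw [pow_succ]; ring

/-- dyadic piece -/
def pc (τ : ℝ) (G : ℤ → Torus → ℂ) (j : ℕ) (k : ℤ) (θ : Torus) : ℂ :=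
  if lev τ (θ - ((τ * (k:ℝ) ^ 2 : ℝ) : Torus)) = j then G k θ else 0

lemma pc_BM (τ : ℝ) {G : ℤ → Torus → ℂ} (hG : ∀ k, BM (G k)) (j : ℕ) (k : ℤ) :
    BM (pc τ G j k) := by
  obtain ⟨h, B, hB⟩ := hG k
  refine ⟨?_, B, ?_⟩
  · apply Measurable.ite _ h measurable_const
    apply measurableSet_preimage (f := fun θ : Torus => lev τ (θ - ((τ * (k:ℝ) ^ 2 : ℝ) : Torus)))
      _ (measurableSet_singleton j)
    exact (lev_meas τ).comp (by fun_prop)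
  · intro x
    unfold pc
    split_ifs
    · exact hB x
    · simpa using (norm_nonneg _).trans (hB x)

lemma aux_count {τ : ℝ} (hτ : 0 < τ) (K : Finset ℤ) (hK : ∀ k ∈ K, τ * (k:ℝ) ^ 2 ≤ 1)
    (G : ℤ → Torus → ℂ) (h0 : ∀ k ∉ K, G k = 0) {q : ℝ} (hq : 1 ≤ q) (hq8 : q ^ 8 = 2)
    {j j' : ℕ} (hj : j ≤ j') (k : ℤ) (θ : Torus) :
    ∑ l ∈ K, (μT).real {s | pc τ G j l s * pc τ G j' (k - l) (θ - s) ≠ 0} ≤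
      14 * τ * q ^ (8 * j + 4 * j') := by
  classical
  have hpi := Real.pi_pos
  have hpi3 := Real.pi_gt_three
  have hpi4 : Real.pi < 4 := by linarith [Real.pi_lt_d2]
  set P := K.filter (fun l => ∃ s, pc τ G j l s * pc τ G j' (k - l) (θ - s) ≠ 0) with hP
  have hM : (1:ℝ) ≤ q ^ (4 * j') := one_le_pow₀ hq
  have h2j : ∀ i : ℕ, (2:ℝ) ^ i = q ^ (8 * i) := fun i => by rw [pow_mul, hq8]
  have hjj : (2:ℝ) ^ j ≤ 2 ^ j' := pow_le_pow_right₀ (by norm_num) hj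
  -- facts for members
  have mem : ∀ l ∈ P, τ * (l:ℝ) ^ 2 ≤ 1 ∧ τ * ((k:ℝ) - l) ^ 2 ≤ 1 ∧
      ‖θ - ((τ * ((l:ℝ) ^ 2 + ((k:ℝ) - l) ^ 2) : ℝ) : Torus)‖ ≤ 2 * Real.pi * τ * 2 ^ j' := by
    intro l hl
    obtain ⟨hlK, s, hs⟩ := Finset.mem_filter.1 hl
    have hs1 := left_ne_zero_of_mul hs
    have hs2 := right_ne_zero_of_mul hs
    have hkl : k - l ∈ K := by
      by_contra hc
      apply hs2
      simp [pc, h0 _ hc]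
    have e1 : lev τ (s - ((τ * (l:ℝ) ^ 2 : ℝ) : Torus)) = j := by
      by_contra hc
      exact hs1 (by simp only [pc, if_neg hc])
    have e2 : lev τ (θ - s - ((τ * ((k - l : ℤ):ℝ) ^ 2 : ℝ) : Torus)) = j' := by
      by_contra hc
      exact hs2 (by simp only [pc, if_neg hc])
    have n1 := lev_norm hτ (s - ((τ * (l:ℝ) ^ 2 : ℝ) : Torus))
    have n2 := lev_norm hτ (θ - s - ((τ * ((k - l : ℤ):ℝ) ^ 2 : ℝ) : Torus))
    rw [e1] at n1
    rw [e2] at n2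
    have h3 := hK _ hkl
    push_cast at h3 n2
    refine ⟨hK l hlK, h3, ?_⟩
    have e3 : θ - ((τ * ((l:ℝ) ^ 2 + ((k:ℝ) - l) ^ 2) : ℝ) : Torus) =
        (s - ((τ * (l:ℝ) ^ 2 : ℝ) : Torus)) + (θ - s - ((τ * ((k:ℝ) - l) ^ 2 : ℝ) : Torus)) := by
      rw [mul_add, AddCircle.coe_add]; abel
    rw [e3]
    calc _ ≤ _ := norm_add_le _ _
      _ ≤ Real.pi * τ * 2 ^ j + Real.pi * τ * 2 ^ j' := add_le_add n1 n2
      _ ≤ Real.pi * τ * 2 ^ j' + Real.pi * τ * 2 ^ j' := by gcongr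
      _ = _ := by ring
  have cardP : (P.card : ℝ) ≤ 14 * q ^ (4 * j') := by
    have := aux_card (P.image (fun l => 2 * l - k)) (6 * q ^ (4 * j')) (by positivity) (by
      intro p hp p' hp'
      obtain ⟨l, hl, rfl⟩ := Finset.mem_image.1 hp
      obtain ⟨l', hl', rfl⟩ := Finset.mem_image.1 hp'
      obtain ⟨a1, a2, a3⟩ := mem l hl
      obtain ⟨b1, b2, b3⟩ := mem l' hl'
      set x : ℝ := τ * ((l:ℝ) ^ 2 + ((k:ℝ) - l) ^ 2) with hx
      set y : ℝ := τ * ((l':ℝ) ^ 2 + ((k:ℝ) - l') ^ 2) with hy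
      have n1 : ‖((x - y : ℝ) : Torus)‖ ≤ 4 * Real.pi * τ * 2 ^ j' := by
        have : ((x - y : ℝ) : Torus) = (θ - (y : Torus)) - (θ - (x : Torus)) := by
          rw [AddCircle.coe_sub]; abel
        rw [this]
        refine (norm_sub_le _ _).trans ?_
        linarith
      have x0 : 0 ≤ x := by positivity
      have y0 : 0 ≤ y := by positivity
      have x2 : x ≤ 2 := by rw [hx, mul_add]; linarith
      have y2 : y ≤ 2 := by rw [hy, mul_add]; linarith
      have n2 : ‖((x - y : ℝ) : Torus)‖ = |x - y| := by
        rw [AddCircle.norm_coe_eq_abs_iff _ (by positivity),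
          abs_of_pos (by positivity : 0 < 2 * Real.pi), abs_le]
        constructor <;> linarith
      rw [n2] at n1
      have n3 := (le_abs_self _).trans n1
      have e4 : x - y = τ * (((2 * l - k : ℤ) : ℝ) ^ 2 - ((2 * l' - k : ℤ) : ℝ) ^ 2) / 2 := by
        rw [hx, hy]; push_cast; ring
      have n4 : τ * (((2 * l - k : ℤ) : ℝ) ^ 2 - ((2 * l' - k : ℤ) : ℝ) ^ 2) ≤
          τ * (8 * Real.pi * 2 ^ j') := by
        rw [e4] at n3; linarith
      have n5 := le_of_mul_le_mul_left n4 hτ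
      have e5 : (6 * q ^ (4 * j')) ^ 2 = 36 * 2 ^ j' := by
        rw [h2j, mul_pow, ← pow_mul]; ring_nf
      rw [e5]
      refine n5.trans ?_
      have : 8 * Real.pi ≤ 36 := by linarith
      gcongr)
    rw [Finset.card_image_of_injective _ (by intro a b h; simp at h; omega)] at this
    linarith
  have hterm : ∀ l, (μT).real {s | pc τ G j l s * pc τ G j' (k - l) (θ - s) ≠ 0} ≤ τ * 2 ^ j := by
    intro l
    have hb := aux_ball ((τ * (l:ℝ) ^ 2 : ℝ) : Torus) (Real.pi * τ * 2 ^ j) (by positivity)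
    have e : Real.pi * τ * 2 ^ j / Real.pi = τ * 2 ^ j := by field_simp
    rw [e] at hb
    refine le_trans (measureReal_mono ?_) hb
    intro s hs
    have hs1 := left_ne_zero_of_mul hs
    have e1 : lev τ (s - ((τ * (l:ℝ) ^ 2 : ℝ) : Torus)) = j := by
      by_contra hc
      exact hs1 (by simp only [pc, if_neg hc])
    have n1 := lev_norm hτ (s - ((τ * (l:ℝ) ^ 2 : ℝ) : Torus))
    rw [e1] at n1
    exact n1
  have hsum : ∑ l ∈ K, (μT).real {s | pc τ G j l s * pc τ G j' (k - l) (θ - s) ≠ 0} =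
      ∑ l ∈ P, (μT).real {s | pc τ G j l s * pc τ G j' (k - l) (θ - s) ≠ 0} := by
    symm
    apply Finset.sum_subset (Finset.filter_subset _ _)
    intro l hl hl'
    have : {s | pc τ G j l s * pc τ G j' (k - l) (θ - s) ≠ 0} = ∅ := by
      ext s
      simp only [Set.mem_ofPred_eq, Set.mem_empty_iff_false, iff_false]
      intro hc
      exact hl' (Finset.mem_filter.2 ⟨hl, s, hc⟩)
    rw [this]; simp
  rw [hsum]
  calc _ ≤ ∑ l ∈ P, τ * 2 ^ j := Finset.sum_le_sum fun l _ => hterm l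
    _ = P.card * (τ * 2 ^ j) := by simp
    _ ≤ 14 * q ^ (4 * j') * (τ * 2 ^ j) := by gcongr
    _ = _ := by rw [h2j, pow_add]; ring

lemma aux_mink {ι : Type*} (s : Finset ι) (S : Finset ℤ) (Z : ι → ℤ → Torus → ℂ)
    (hZ : ∀ p n, Continuous (Z p n)) (b : ι → ℝ) (hb : ∀ p, 0 ≤ b p)
    (h : ∀ p ∈ s, ∑ n ∈ S, ∫ x, ‖Z p n x‖ ^ 2 ∂μT ≤ b p ^ 2) :
    ∑ n ∈ S, ∫ x, ‖∑ p ∈ s, Z p n x‖ ^ 2 ∂μT ≤ (∑ p ∈ s, b p) ^ 2 := by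
  have key : ∀ ε > 0, ∑ n ∈ S, ∫ x, ‖∑ p ∈ s, Z p n x‖ ^ 2 ∂μT ≤ (∑ p ∈ s, (b p + ε)) ^ 2 := by
    intro ε hε
    have hbp : ∀ p, 0 < b p + ε := fun p => by linarith [hb p]
    have iZ : ∀ p n, Integrable (fun x => ‖Z p n x‖ ^ 2) μT := fun p n =>
      (BM.of_cont (hZ p n)).int_sq
    have h1 : ∀ n x, ‖∑ p ∈ s, Z p n x‖ ^ 2 ≤
        (∑ p ∈ s, (b p + ε)) * ∑ p ∈ s, ‖Z p n x‖ ^ 2 / (b p + ε) := by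
      intro n x
      rcases s.eq_empty_or_nonempty with rfl | hne
      · simp
      have hpos : 0 < ∑ p ∈ s, (b p + ε) := Finset.sum_pos (fun p _ => hbp p) hne
      have t := Finset.sq_sum_div_le_sum_sq_div s (fun p => ‖Z p n x‖) (g := fun p => b p + ε)
        (fun p _ => hbp p)
      rw [div_le_iff₀ hpos] at t
      have : ‖∑ p ∈ s, Z p n x‖ ^ 2 ≤ (∑ p ∈ s, ‖Z p n x‖) ^ 2 := by
        gcongr; exact norm_sum_le _ _
      linarith
    have hs0 : 0 ≤ ∑ p ∈ s, (b p + ε) := Finset.sum_nonneg fun p _ => (hbp p).le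
    calc _ ≤ ∑ n ∈ S, ∫ x, (∑ p ∈ s, (b p + ε)) * ∑ p ∈ s, ‖Z p n x‖ ^ 2 / (b p + ε) ∂μT := by
          apply Finset.sum_le_sum
          intro n _
          apply integral_mono
          · exact (BM.sum s fun p _ => BM.of_cont (hZ p n)).int_sq
          · exact (integrable_finsetSum _ fun p _ => (iZ p n).div_const _).const_mul _
          · exact h1 n
      _ = (∑ p ∈ s, (b p + ε)) * ∑ p ∈ s, (∑ n ∈ S, ∫ x, ‖Z p n x‖ ^ 2 ∂μT) / (b p + ε) := by
          simp_rw [integral_const_mul]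
          rw [← Finset.mul_sum]
          congr 1
          simp_rw [Finset.sum_div]
          rw [Finset.sum_comm]
          apply Finset.sum_congr rfl
          intro n _
          rw [integral_finsetSum _ fun p _ => (iZ p n).div_const _]
          simp_rw [integral_div]
      _ ≤ (∑ p ∈ s, (b p + ε)) * ∑ p ∈ s, (b p + ε) := by
          gcongr with p hp
          rw [div_le_iff₀ (hbp p)]
          have := h p hp
          nlinarith [hb p]
      _ = _ := by ring
  have hc : Tendsto (fun ε : ℝ => (∑ p ∈ s, (b p + ε)) ^ 2) (𝓝[>] 0) (𝓝 ((∑ p ∈ s, (b p + 0)) ^ 2)) := by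
    have : Continuous (fun ε : ℝ => (∑ p ∈ s, (b p + ε)) ^ 2) := by fun_prop
    exact (this.tendsto 0).mono_left nhdsWithin_le_nhds
  simp only [add_zero] at hc
  refine ge_of_tendsto hc ?_
  filter_upwards [self_mem_nhdsWithin] with ε hε
  exact key ε hε

lemma aux_geom (J j : ℕ) {r : ℝ} (h0 : 0 < r) (h1 : r < 1) :
    ∑ i ∈ Finset.range J, r ^ (max j i - min j i) ≤ 2 / (1 - r) := by
  have g : ∀ T : Finset ℕ, ∑ i ∈ T, r ^ i ≤ (1 - r)⁻¹ := by
    intro T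
    rw [← tsum_geometric_of_lt_one h0.le h1]
    exact (summable_geometric_of_lt_one h0.le h1).sum_le_tsum _ (fun _ _ => by positivity)
  rw [← Finset.sum_filter_add_sum_filter_not _ (fun i => i ≤ j)]
  have a : ∑ i ∈ (Finset.range J).filter (fun i => i ≤ j), r ^ (max j i - min j i) ≤ (1 - r)⁻¹ := by
    refine le_trans (le_of_eq ?_) (g (((Finset.range J).filter (fun i => i ≤ j)).image (fun i => j - i)))
    rw [Finset.sum_image]
    · apply Finset.sum_congr rfl
      intro i hi
      have := (Finset.mem_filter.1 hi).2
      rw [max_eq_left this, min_eq_right this]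
    · intro i hi i' hi' h
      have := (Finset.mem_filter.1 hi).2
      have := (Finset.mem_filter.1 hi').2
      simp only at h
      omega
  have b : ∑ i ∈ (Finset.range J).filter (fun i => ¬ i ≤ j), r ^ (max j i - min j i) ≤ (1 - r)⁻¹ := by
    refine le_trans (le_of_eq ?_) (g (((Finset.range J).filter (fun i => ¬ i ≤ j)).image (fun i => i - j)))
    rw [Finset.sum_image]
    · apply Finset.sum_congr rfl
      intro i hi
      have := le_of_not_ge (Finset.mem_filter.1 hi).2
      rw [max_eq_right this, min_eq_left this]
    · intro i hi i' hi' h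
      have := (Finset.mem_filter.1 hi).2
      have := (Finset.mem_filter.1 hi').2
      simp only at h
      omega
  rw [div_eq_mul_inv]
  linarith

lemma aux_schur (J : ℕ) {r : ℝ} (h0 : 0 < r) (h1 : r < 1) (a : ℕ → ℝ) :
    ∑ p ∈ Finset.range J ×ˢ Finset.range J, r ^ (max p.1 p.2 - min p.1 p.2) * a p.1 * a p.2 ≤
      2 / (1 - r) * ∑ j ∈ Finset.range J, a j ^ 2 := by
  have h : ∀ p : ℕ × ℕ, r ^ (max p.1 p.2 - min p.1 p.2) * a p.1 * a p.2 ≤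
      r ^ (max p.1 p.2 - min p.1 p.2) * a p.1 ^ 2 / 2 +
      r ^ (max p.2 p.1 - min p.2 p.1) * a p.2 ^ 2 / 2 := by
    intro p
    rw [max_comm p.2, min_comm p.2]
    have : 0 < r ^ (max p.1 p.2 - min p.1 p.2) := by positivity
    nlinarith [sq_nonneg (a p.1 - a p.2)]
  have s1 : ∑ i ∈ Finset.range J, ∑ i' ∈ Finset.range J, r ^ (max i i' - min i i') * a i ^ 2 / 2 ≤
      2 / (1 - r) * (∑ j ∈ Finset.range J, a j ^ 2) / 2 := by
    rw [Finset.mul_sum, Finset.sum_div]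
    apply Finset.sum_le_sum
    intro i _
    rw [← Finset.sum_div, ← Finset.sum_mul]
    have := aux_geom J i h0 h1
    gcongr
  refine (Finset.sum_le_sum fun p _ => h p).trans ?_
  rw [Finset.sum_add_distrib, Finset.sum_product, Finset.sum_product_right]
  linarith

lemma vv_cont (K : Finset ℤ) (V : ℤ → Torus → ℂ) (n : ℤ) : Continuous (vv K V n) := by
  unfold vv; fun_prop

lemma aux_pair {τ : ℝ} (hτ : 0 < τ) (K S : Finset ℤ) (hK : ∀ k ∈ K, τ * (k:ℝ) ^ 2 ≤ 1)
    (G : ℤ → Torus → ℂ) (hG : ∀ k, BM (G k)) (h0 : ∀ k ∉ K, G k = 0) {q : ℝ} (hq : 1 ≤ q)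
    (hq8 : q ^ 8 = 2) {j j' : ℕ} (hj : j ≤ j') :
    ∑ n ∈ S, ∫ x, ‖vv K (pc τ G j) n x * vv K (pc τ G j') n x‖ ^ 2 ∂μT ≤
      (√(14 * τ) * (q⁻¹ ^ (max j j' - min j j') *
        (q ^ (3 * j) * √(∑ k ∈ K, ∫ s, ‖pc τ G j k s‖ ^ 2 ∂μT)) *
        (q ^ (3 * j') * √(∑ k ∈ K, ∫ s, ‖pc τ G j' k s‖ ^ 2 ∂μT)))) ^ 2 := by
  have h := aux_bilin K S (pc τ G j) (pc τ G j') (pc_BM τ hG j) (pc_BM τ hG j')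
    (by intro k hk; ext θ; simp [pc, h0 k hk]) _ (aux_count hτ K hK G h0 hq hq8 hj)
  refine h.trans (le_of_eq ?_)
  have hn : ∀ i, 0 ≤ ∑ k ∈ K, ∫ s, ‖pc τ G i k s‖ ^ 2 ∂μT := fun i =>
    Finset.sum_nonneg fun k _ => integral_nonneg fun s => by positivity
  simp only [mul_pow]
  rw [Real.sq_sqrt (hn j), Real.sq_sqrt (hn j'), Real.sq_sqrt (by positivity : 0 ≤ 14 * τ)]
  obtain ⟨d, rfl⟩ := Nat.exists_eq_add_of_le hj
  rw [max_eq_right hj, min_eq_left hj, Nat.add_sub_cancel_left]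
  have hq0 : q ≠ 0 := by positivity
  have e : q ^ (8 * j + 4 * (j + d)) = (q⁻¹ ^ d) ^ 2 * (q ^ (3 * j)) ^ 2 * (q ^ (3 * (j + d))) ^ 2 := by
    rw [inv_pow, inv_pow, ← pow_mul, ← pow_mul, ← pow_mul]
    field_simp
    ring
  rw [e]; ring

lemma aux_L4 {τ : ℝ} (hτ : 0 < τ) (K S : Finset ℤ) (hK : ∀ k ∈ K, τ * (k:ℝ) ^ 2 ≤ 1)
    (G : ℤ → Torus → ℂ) (hG : ∀ k, BM (G k)) (h0 : ∀ k ∉ K, G k = 0) {q : ℝ} (hq : 1 < q)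
    (hq8 : q ^ 8 = 2) :
    ∑ n ∈ S, ∫ x, ‖vv K G n x‖ ^ 4 ∂μT ≤ 14 * τ * (2 / (1 - q⁻¹)) ^ 2 *
      (∑ k ∈ K, ∫ θ, Dt τ (θ - ((τ * (k:ℝ) ^ 2 : ℝ) : Torus)) ^ (3 / 4 : ℝ) * ‖G k θ‖ ^ 2 ∂μT) ^ 2 := by
  obtain ⟨J, hJ⟩ := lev_bdd τ
  have hq0 : 0 < q := by linarith
  have hr0 : 0 < q⁻¹ := by positivity
  have hr1 : q⁻¹ < 1 := inv_lt_one_of_one_lt₀ hq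
  set nn : ℕ → ℝ := fun j => ∑ k ∈ K, ∫ s, ‖pc τ G j k s‖ ^ 2 ∂μT with hnn
  have hn : ∀ i, 0 ≤ nn i := fun i =>
    Finset.sum_nonneg fun k _ => integral_nonneg fun s => by positivity
  set a : ℕ → ℝ := fun j => q ^ (3 * j) * √(nn j) with ha
  have ha0 : ∀ j, 0 ≤ a j := fun j => by positivity
  have hsplit : ∀ n x, vv K G n x = ∑ j ∈ Finset.range J, vv K (pc τ G j) n x := by
    intro n x
    unfold vv
    rw [Finset.sum_comm]
    apply Finset.sum_congr rfl
    intro k _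
    rw [← Finset.sum_mul]
    congr 1
    have : G k = ∑ j ∈ Finset.range J, pc τ G j k := by
      ext θ
      simp only [Finset.sum_apply, pc]
      rw [Finset.sum_ite_eq, if_pos (Finset.mem_range.2 (hJ _))]
    conv_lhs => rw [this]
    rw [fourierCoeff.sum _ _ (fun j _ => (pc_BM τ hG j k).integrable), Finset.sum_apply]
  have h4 : ∀ n x, ‖vv K G n x‖ ^ 4 = ‖∑ p ∈ Finset.range J ×ˢ Finset.range J,
      vv K (pc τ G p.1) n x * vv K (pc τ G p.2) n x‖ ^ 2 := by
    intro n x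
    rw [Finset.sum_product]
    dsimp only
    rw [← Finset.sum_mul_sum, ← hsplit, norm_mul]; ring
  simp_rw [h4]
  have m := aux_mink (Finset.range J ×ˢ Finset.range J) S
    (fun p n x => vv K (pc τ G p.1) n x * vv K (pc τ G p.2) n x)
    (fun p n => (vv_cont _ _ _).mul (vv_cont _ _ _))
    (fun p => √(14 * τ) * (q⁻¹ ^ (max p.1 p.2 - min p.1 p.2) * a p.1 * a p.2))
    (fun p => by have := ha0 p.1; have := ha0 p.2; positivity)
    (by
      rintro ⟨j, j'⟩ _
      rcases le_total j j' with hj | hj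
      · exact aux_pair hτ K S hK G hG h0 hq.le hq8 hj
      · have := aux_pair hτ K S hK G hG h0 hq.le hq8 hj
        simp only
        rw [max_comm, min_comm, mul_right_comm]
        simp_rw [mul_comm (vv K (pc τ G j) _ _)]
        exact this)
  refine m.trans ?_
  rw [← Finset.mul_sum, mul_pow, Real.sq_sqrt (by positivity), mul_assoc (14 * τ), ← mul_pow]
  have hs := aux_schur J hr0 hr1 a
  have hr2 : 0 < 2 / (1 - q⁻¹) := div_pos two_pos (by linarith)
  have hpow : ∀ i : ℕ, q ^ (6 * i) = ((2:ℝ) ^ i) ^ (3 / 4 : ℝ) := by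
    intro i
    rw [← hq8, ← pow_mul, ← Real.rpow_natCast, ← Real.rpow_natCast, ← Real.rpow_mul hq0.le]
    congr 1
    push_cast; ring
  have hpt : ∀ k θ, ∑ j ∈ Finset.range J, q ^ (6 * j) * ‖pc τ G j k θ‖ ^ 2 ≤
      Dt τ (θ - ((τ * (k:ℝ) ^ 2 : ℝ) : Torus)) ^ (3 / 4 : ℝ) * ‖G k θ‖ ^ 2 := by
    intro k θ
    have e : ∀ j, q ^ (6 * j) * ‖pc τ G j k θ‖ ^ 2 =
        if lev τ (θ - ((τ * (k:ℝ) ^ 2 : ℝ) : Torus)) = j then q ^ (6 * j) * ‖G k θ‖ ^ 2 else 0 := by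
      intro j
      unfold pc
      split_ifs <;> simp
    simp_rw [e]
    rw [Finset.sum_ite_eq, if_pos (Finset.mem_range.2 (hJ _))]
    gcongr
    have l := lev_le τ (θ - ((τ * (k:ℝ) ^ 2 : ℝ) : Torus))
    have l2 := Real.rpow_le_rpow (by positivity) l (by norm_num : (0:ℝ) ≤ 3 / 4)
    refine le_trans (le_of_eq ?_) l2
    exact hpow _
  have hDc : ∀ k : ℤ, Continuous fun θ : Torus =>
      Dt τ (θ - ((τ * (k:ℝ) ^ 2 : ℝ) : Torus)) ^ (3 / 4 : ℝ) := by
    intro k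
    apply Continuous.rpow_const ((Dt_cont τ).comp (by fun_prop))
    intro θ; right; norm_num
  have hA : ∑ j ∈ Finset.range J, a j ^ 2 ≤
      ∑ k ∈ K, ∫ θ, Dt τ (θ - ((τ * (k:ℝ) ^ 2 : ℝ) : Torus)) ^ (3 / 4 : ℝ) * ‖G k θ‖ ^ 2 ∂μT := by
    have e : ∀ j, a j ^ 2 = ∑ k ∈ K, ∫ θ, q ^ (6 * j) * ‖pc τ G j k θ‖ ^ 2 ∂μT := by
      intro j
      simp only [ha]
      rw [mul_pow, Real.sq_sqrt (hn j), ← pow_mul, hnn, Finset.mul_sum]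
      apply Finset.sum_congr rfl
      intro k _
      rw [integral_const_mul]; ring_nf
    simp_rw [e]
    rw [Finset.sum_comm]
    apply Finset.sum_le_sum
    intro k _
    rw [← integral_finsetSum _ fun j _ => ((pc_BM τ hG j k).int_sq.const_mul _)]
    apply integral_mono
    · exact integrable_finsetSum _ fun j _ => ((pc_BM τ hG j k).int_sq.const_mul _)
    · obtain ⟨B, hB⟩ := (isCompact_univ (X := Torus)).exists_bound_of_continuousOn
        (hDc k).continuousOn
      exact (hG k).int_sq.bdd_mul (hDc k).aestronglyMeasurable (ae_of_all _ fun θ => hB θ trivial)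
    · exact hpt k
  have hs0 : 0 ≤ ∑ p ∈ Finset.range J ×ˢ Finset.range J,
      q⁻¹ ^ (max p.1 p.2 - min p.1 p.2) * a p.1 * a p.2 :=
    Finset.sum_nonneg fun p _ => by have := ha0 p.1; have := ha0 p.2; positivity
  have hfin := hs.trans (mul_le_mul_of_nonneg_left hA hr2.le)
  gcongr

/-- reduction: the dual pairing bound -/
lemma aux_dual {τ : ℝ} (hτ : 0 < τ) (K S : Finset ℤ) (hK : ∀ k ∈ K, τ * (k:ℝ) ^ 2 ≤ 1)
    (u : ℤ → Torus → ℂ) (hu : ∀ n, MemLp (u n) (ENNReal.ofReal (4 / 3)) μT)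
    {q : ℝ} (hq : 1 < q) (hq8 : q ^ 8 = 2) (Q : ℝ)
    (hQ : Q = ∑ k ∈ K, ∫ θ, Dt τ (θ - ((τ * (k:ℝ) ^ 2 : ℝ) : Torus)) ^ (-(3 / 4) : ℝ) *
      ‖∑ m ∈ S, fourierCoeff (u m) k * (fourier m θ : ℂ)‖ ^ 2 ∂μT) :
    Q ^ 4 ≤ (∑ m ∈ S, (eLpNorm (u m) (ENNReal.ofReal (4 / 3)) μT).toReal ^ (4 / 3 : ℝ)) ^ 3 *
      (14 * τ * (2 / (1 - q⁻¹)) ^ 2 * Q ^ 2) := by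
  classical
  set F : ℤ → Torus → ℂ := fun k θ => ∑ m ∈ S, fourierCoeff (u m) k * (fourier m θ : ℂ) with hF
  set D : ℤ → Torus → ℝ := fun k θ => Dt τ (θ - ((τ * (k:ℝ) ^ 2 : ℝ) : Torus)) with hD
  have hD1 : ∀ k θ, 1 ≤ D k θ := fun k θ => Dt_one_le _ _
  have hDc : ∀ k, Continuous (D k) := fun k => (Dt_cont τ).comp (by fun_prop)
  have hDr : ∀ k, Continuous (fun θ => D k θ ^ (-(3 / 4) : ℝ)) := fun k =>
    (hDc k).rpow_const fun θ => Or.inl (by linarith [hD1 k θ])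
  have hFc : ∀ k, Continuous (F k) := fun k => by simp only [hF]; fun_prop
  set G : ℤ → Torus → ℂ := fun k θ => if k ∈ K then ((D k θ ^ (-(3 / 4) : ℝ) : ℝ) : ℂ) * F k θ else 0
    with hG
  have hGc : ∀ k, Continuous (G k) := by
    intro k
    simp only [hG]
    split_ifs
    · exact (continuous_ofReal.comp (hDr k)).mul (hFc k)
    · exact continuous_const
  have hGB : ∀ k, BM (G k) := fun k => BM.of_cont (hGc k)
  have hu1 : ∀ n, Integrable (u n) μT := fun n => (hu n).integrable (by
    rw [← ENNReal.ofReal_one]; exact ENNReal.ofReal_le_ofReal (by norm_num))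
  have hL4 := aux_L4 hτ K S hK G hGB (fun k hk => by ext θ; simp [hG, hk]) hq hq8
  have hQ' : ∑ k ∈ K, ∫ θ, Dt τ (θ - ((τ * (k:ℝ) ^ 2 : ℝ) : Torus)) ^ (3 / 4 : ℝ) * ‖G k θ‖ ^ 2 ∂μT = Q := by
    rw [hQ]
    apply Finset.sum_congr rfl
    intro k hk
    apply integral_congr_ae (ae_of_all _ fun θ => ?_)
    have hp : 0 < D k θ := by linarith [hD1 k θ]
    simp only [hG, if_pos hk, norm_mul, Complex.norm_real, mul_pow]
    change D k θ ^ (3 / 4 : ℝ) * (_ * ‖F k θ‖ ^ 2) = D k θ ^ (-(3 / 4) : ℝ) * ‖F k θ‖ ^ 2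
    rw [Real.norm_of_nonneg (by positivity), ← mul_assoc]
    congr 1
    rw [sq, ← mul_assoc, ← Real.rpow_add hp]
    norm_num
  rw [hQ'] at hL4
  -- pairing
  have hpair : (Q : ℂ) = ∑ m ∈ S, ∫ x, u m x * (starRingEnd ℂ) (vv K G m x) ∂μT := by
    have e1 : ∀ m, ∫ x, u m x * (starRingEnd ℂ) (vv K G m x) ∂μT =
        ∑ k ∈ K, fourierCoeff (u m) k * (starRingEnd ℂ) (fourierCoeff (G k) m) := by
      intro m
      have : ∀ x, u m x * (starRingEnd ℂ) (vv K G m x) = ∑ k ∈ K,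
          (starRingEnd ℂ) (fourierCoeff (G k) m) * ((fourier (-k) x : ℂ) • u m x) := by
        intro x
        simp only [vv, map_sum, map_mul, Finset.mul_sum, smul_eq_mul, fourier_neg]
        apply Finset.sum_congr rfl
        intro k _; ring
      simp_rw [this]
      rw [integral_finsetSum _ fun k _ => ((hu1 m).fourier_smul (-k)).const_mul _]
      apply Finset.sum_congr rfl
      intro k _
      rw [integral_const_mul, mul_comm]; rfl
    simp_rw [e1]
    rw [Finset.sum_comm, hQ]
    push_cast
    apply Finset.sum_congr rfl
    intro k hk
    rw [← integral_complex_ofReal]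
    have e2 : ∀ θ, ((D k θ ^ (-(3 / 4) : ℝ) * ‖F k θ‖ ^ 2 : ℝ) : ℂ) = ∑ m ∈ S,
        fourierCoeff (u m) k * (starRingEnd ℂ) ((fourier (-m) θ : ℂ) • G k θ) := by
      intro θ
      have : ∑ m ∈ S, fourierCoeff (u m) k * (starRingEnd ℂ) ((fourier (-m) θ : ℂ) • G k θ) =
          F k θ * (starRingEnd ℂ) (G k θ) := by
        simp only [hF, Finset.sum_mul, smul_eq_mul, map_mul, fourier_neg, Complex.conj_conj]
        apply Finset.sum_congr rfl
        intro m _; ring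
      rw [this]
      simp only [hG, if_pos hk, map_mul, Complex.conj_ofReal]
      push_cast
      rw [← Complex.mul_conj']; ring
    change ∫ θ, ((D k θ ^ (-(3 / 4) : ℝ) * ‖F k θ‖ ^ 2 : ℝ) : ℂ) ∂μT = _
    simp_rw [e2]
    have ic : ∀ m, Integrable (fun θ => (starRingEnd ℂ) ((fourier (-m) θ : ℂ) • G k θ)) μT :=
      fun m => (BM.of_cont (Complex.continuous_conj.comp
        (((fourier (-m) : C(Torus, ℂ)).continuous).smul (hGc k)))).integrable
    rw [integral_finsetSum _ fun m _ => (ic m).const_mul _]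
    apply Finset.sum_congr rfl
    intro m _
    rw [integral_const_mul, integral_conj]; rfl
  have hpq : (4 / 3 : ℝ).HolderConjugate 4 := by
    rw [Real.holderConjugate_iff]; norm_num
  set A : ℤ → ℝ := fun m => (eLpNorm (u m) (ENNReal.ofReal (4 / 3)) μT).toReal with hA
  have hA0 : ∀ m, 0 ≤ A m := fun m => ENNReal.toReal_nonneg
  set Bm : ℤ → ℝ := fun m => (∫ x, ‖vv K G m x‖ ^ (4:ℝ) ∂μT) ^ (1 / 4 : ℝ) with hBm
  have hI0 : ∀ m, 0 ≤ ∫ x, ‖vv K G m x‖ ^ (4:ℝ) ∂μT := fun m =>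
    integral_nonneg fun x => by positivity
  have hB0 : ∀ m, 0 ≤ Bm m := fun m => Real.rpow_nonneg (hI0 m) _
  have hAB : ∀ m, ‖∫ x, u m x * (starRingEnd ℂ) (vv K G m x) ∂μT‖ ≤ A m * Bm m := by
    intro m
    refine (norm_integral_le_integral_norm _).trans ?_
    simp only [norm_mul, RCLike.norm_conj]
    have := integral_mul_le_Lp_mul_Lq_of_nonneg hpq (μ := μT) (f := fun x => ‖u m x‖)
      (g := fun x => ‖vv K G m x‖) (ae_of_all _ fun x => norm_nonneg _)
      (ae_of_all _ fun x => norm_nonneg _) (hu m).norm ((BM.of_cont (vv_cont K G m)).memLp _).norm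
    refine this.trans (le_of_eq ?_)
    congr 1
    simp only [hA]
    rw [(hu m).eLpNorm_eq_integral_rpow_norm (by simp) (by simp),
      ENNReal.toReal_ofReal (by norm_num : (0:ℝ) ≤ 4 / 3), ENNReal.toReal_ofReal]
    · rw [one_div]
    · exact Real.rpow_nonneg (integral_nonneg fun x => by positivity) _
  have hQ0 : 0 ≤ Q := by
    rw [hQ]
    refine Finset.sum_nonneg fun k _ => integral_nonneg fun θ => ?_
    have : 0 ≤ D k θ := by linarith [hD1 k θ]
    exact mul_nonneg (Real.rpow_nonneg this _) (by positivity)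
  have hQle : Q ≤ ∑ m ∈ S, A m * Bm m := by
    have : Q = ‖(Q:ℂ)‖ := by rw [Complex.norm_real, Real.norm_of_nonneg hQ0]
    rw [this, hpair]
    exact (norm_sum_le _ _).trans (Finset.sum_le_sum fun m _ => hAB m)
  have hH := hQle.trans (Real.inner_le_Lp_mul_Lq_of_nonneg S hpq (fun m _ => hA0 m) (fun m _ => hB0 m))
  have hB4 : ∑ m ∈ S, Bm m ^ (4:ℝ) = ∑ n ∈ S, ∫ x, ‖vv K G n x‖ ^ 4 ∂μT := by
    apply Finset.sum_congr rfl
    intro m _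
    simp only [hBm]
    rw [← Real.rpow_mul (hI0 m)]
    norm_num
  have hU0 : 0 ≤ ∑ m ∈ S, A m ^ (4 / 3 : ℝ) := Finset.sum_nonneg fun m _ => Real.rpow_nonneg (hA0 m) _
  have hW0 : 0 ≤ ∑ m ∈ S, Bm m ^ (4 : ℝ) := Finset.sum_nonneg fun m _ => Real.rpow_nonneg (hB0 m) _
  calc Q ^ 4 ≤ ((∑ m ∈ S, A m ^ (4 / 3 : ℝ)) ^ (1 / (4 / 3) : ℝ) *
        (∑ m ∈ S, Bm m ^ (4 : ℝ)) ^ (1 / 4 : ℝ)) ^ 4 := by gcongr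
    _ = (∑ m ∈ S, A m ^ (4 / 3 : ℝ)) ^ 3 * ∑ m ∈ S, Bm m ^ (4 : ℝ) := by
        rw [mul_pow, ← Real.rpow_natCast, ← Real.rpow_natCast, ← Real.rpow_mul hU0,
          ← Real.rpow_mul hW0, ← Real.rpow_natCast]
        norm_num
    _ ≤ _ := by
        rw [hB4]
        gcongr

lemma aux_Kfin {τ : ℝ} : {k : ℤ | |(k : ℝ)| ≤ τ ^ (-(1 : ℝ) / 2)}.Finite := by
  apply (Set.finite_Icc (-⌈τ ^ (-(1 : ℝ) / 2)⌉) ⌈τ ^ (-(1 : ℝ) / 2)⌉).subset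
  intro k hk
  have hk' : |(k : ℝ)| ≤ τ ^ (-(1 : ℝ) / 2) := hk
  obtain ⟨h1, h2⟩ := abs_le.1 (hk'.trans (Int.le_ceil _))
  exact ⟨by exact_mod_cast h1, by exact_mod_cast h2⟩

lemma aux_coeff_proj (τ : ℝ) (f : Torus → ℂ) (K : Finset ℤ)
    (hK : ∀ k : ℤ, k ∈ K ↔ |(k : ℝ)| ≤ τ ^ (-(1 : ℝ) / 2)) (k : ℤ) :
    fourierCoeff (projC τ f) k = if k ∈ K then fourierCoeff f k else 0 := by
  rw [← aux_coeff_poly]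
  congr 1
  ext x
  unfold projC
  rw [tsum_eq_sum (s := K)]
  · apply Finset.sum_congr rfl
    intro l hl
    rw [if_pos ((hK l).1 hl)]
  · intro l hl
    rw [if_neg (fun h => hl ((hK l).2 h))]

lemma aux_Xd {τ : ℝ} (hτ : 0 < τ) (K S : Finset ℤ)
    (hK : ∀ k : ℤ, k ∈ K ↔ |(k : ℝ)| ≤ τ ^ (-(1 : ℝ) / 2))
    (u : ℤ → Torus → ℂ) (hS : ∀ m ∉ S, u m = 0) :
    XdNorm τ 0 (-(3 / 8)) (fun n => projC τ (u n)) = √(2 * Real.pi * τ *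
      ∑ k ∈ K, ∫ θ, Dt τ (θ - ((τ * (k:ℝ) ^ 2 : ℝ) : Torus)) ^ (-(3 / 4) : ℝ) *
      ‖∑ m ∈ S, fourierCoeff (u m) k * (fourier m θ : ℂ)‖ ^ 2 ∂μT) := by
  have hpi := Real.pi_pos
  have hpiC : (Real.pi : ℂ) ≠ 0 := by exact_mod_cast hpi.ne'
  have hexp : ∀ (m : ℤ) (y : ℝ), (fourier m (y : Torus) : ℂ) = Complex.exp (Complex.I * m * y) := by
    intro m y
    rw [fourier_coe_apply]
    congr 1
    push_cast
    field_simp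
  set Φ : Torus → ℝ := fun θ => ∑ k ∈ K, τ ^ 2 *
    (Dt τ (θ - ((τ * (k:ℝ) ^ 2 : ℝ) : Torus)) ^ (-(3 / 4) : ℝ) *
      ‖∑ m ∈ S, fourierCoeff (u m) k * (fourier m θ : ℂ)‖ ^ 2) with hΦ
  have hpt : ∀ σ : ℝ, (∑' k : ℤ, jbr k ^ (2 * (0:ℝ)) * jbr ‖dtau τ (σ - (k : ℝ) ^ 2)‖ ^ (2 * (-(3 / 8) : ℝ)) *
      ‖(τ : ℂ) * ∑' m : ℤ, fourierCoeff (projC τ (u m)) k * Complex.exp (Complex.I * m * τ * σ)‖ ^ 2) =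
      Φ ((τ * σ : ℝ) : Torus) := by
    intro σ
    have hm : ∀ k : ℤ, ∑' m : ℤ, fourierCoeff (projC τ (u m)) k * Complex.exp (Complex.I * m * τ * σ) =
        if k ∈ K then ∑ m ∈ S, fourierCoeff (u m) k * (fourier m ((τ * σ : ℝ) : Torus) : ℂ) else 0 := by
      intro k
      simp_rw [aux_coeff_proj τ _ K hK]
      rw [tsum_eq_sum (s := S)]
      · split_ifs
        · apply Finset.sum_congr rfl
          intro m _
          rw [hexp]; push_cast; congr 2; ring
        · simp
      · intro m hm
        rw [hS m hm]; simp [fourierCoeff]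
    simp_rw [hm]
    rw [tsum_eq_sum (s := K)]
    · simp only [hΦ]
      apply Finset.sum_congr rfl
      intro k hk
      rw [if_pos hk, norm_mul, Complex.norm_real, Real.norm_of_nonneg hτ.le, mul_pow]
      have e : jbr ‖dtau τ (σ - (k : ℝ) ^ 2)‖ =
          Dt τ (((τ * σ : ℝ) : Torus) - ((τ * (k:ℝ) ^ 2 : ℝ) : Torus)) := by
        unfold Dt dtau
        rw [← AddCircle.coe_sub, hexp, norm_div, Complex.norm_real, Real.norm_of_nonneg hτ.le]
        congr 4
        push_cast; ring_nf
      rw [e]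
      norm_num
      ring
    · intro k hk
      rw [if_neg hk]; simp
  have hDc : ∀ k : ℤ, Continuous fun θ : Torus =>
      Dt τ (θ - ((τ * (k:ℝ) ^ 2 : ℝ) : Torus)) ^ (-(3 / 4) : ℝ) := fun k =>
    ((Dt_cont τ).comp (by fun_prop)).rpow_const fun θ => Or.inl (by
      have := Dt_one_le τ (θ - ((τ * (k:ℝ) ^ 2 : ℝ) : Torus))
      simp only [Function.comp]
      linarith)
  unfold XdNorm
  congr 1
  simp_rw [hpt]
  rw [← intervalIntegral.integral_of_le (by
    have : 0 < Real.pi / τ := by positivity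
    linarith)]
  rw [intervalIntegral.integral_comp_mul_left (fun y : ℝ => Φ (y : Torus)) hτ.ne']
  have e1 : τ * -(Real.pi / τ) = -Real.pi := by field_simp
  have e2 : τ * (Real.pi / τ) = -Real.pi + 2 * Real.pi := by field_simp; ring
  rw [e1, e2, AddCircle.intervalIntegral_preimage]
  have e3 : ∫ b : Torus, Φ b = 2 * Real.pi * ∫ b, Φ b ∂μT := by
    rw [integral_haarAddCircle, smul_eq_mul]; field_simp
  have hi : ∀ k : ℤ, Integrable (fun θ : Torus =>
      Dt τ (θ - ((τ * (k:ℝ) ^ 2 : ℝ) : Torus)) ^ (-(3 / 4) : ℝ) *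
      ‖∑ m ∈ S, fourierCoeff (u m) k * (fourier m θ : ℂ)‖ ^ 2) μT := fun k => by
    apply Continuous.integrable_of_hasCompactSupport
    · exact (hDc k).mul (by fun_prop)
    · exact HasCompactSupport.of_compactSpace _
  rw [e3]
  simp only [hΦ]
  rw [integral_finsetSum _ fun k _ => (hi k).const_mul _]
  simp_rw [integral_const_mul]
  rw [← Finset.mul_sum, smul_eq_mul]
  field_simp

/-- The dual estimate `‖(Π_τ u_n)‖_{X^{0,-3/8}_τ} ≲ ‖(u_n)‖_{ℓ^{4/3}_τ L^{4/3}}`. -/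
theorem discrete_dual_l43_estimate :
    ∃ C > (0 : ℝ), ∀ τ ∈ Set.Ioc (0 : ℝ) 1, ∀ u : ℤ → Torus → ℂ,
      (∀ n, MemLp (u n) (ENNReal.ofReal (4 / 3)) haarAddCircle) → {n : ℤ | u n ≠ 0}.Finite →
      XdNorm τ 0 (-(3 / 8)) (fun n => projC τ (u n)) ≤ C * lpLqNorm τ (4 / 3) (4 / 3) u := by
  have hpi := Real.pi_pos
  set q : ℝ := (2:ℝ) ^ (1 / 8 : ℝ) with hqd
  have hq : 1 < q := Real.one_lt_rpow (by norm_num) (by norm_num)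
  have hq8 : q ^ 8 = 2 := by
    rw [hqd, ← Real.rpow_natCast, ← Real.rpow_mul (by norm_num)]; norm_num
  have hr1 : q⁻¹ < 1 := inv_lt_one_of_one_lt₀ hq
  have hr2 : 0 < 2 / (1 - q⁻¹) := div_pos two_pos (by linarith)
  set C1 : ℝ := 14 * (2 / (1 - q⁻¹)) ^ 2 with hC1
  have hC1p : 0 < C1 := by positivity
  refine ⟨√√((2 * Real.pi) ^ 2 * C1), by positivity, ?_⟩
  rintro τ ⟨hτ, _⟩ u hu hfin
  set K : Finset ℤ := (aux_Kfin (τ := τ)).toFinset with hKd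
  have hK : ∀ k : ℤ, k ∈ K ↔ |(k : ℝ)| ≤ τ ^ (-(1 : ℝ) / 2) := fun k => by
    rw [hKd, Set.Finite.mem_toFinset]; rfl
  have hK1 : ∀ k ∈ K, τ * (k:ℝ) ^ 2 ≤ 1 := by
    intro k hk
    have h := (hK k).1 hk
    have h2 : (k:ℝ) ^ 2 ≤ (τ ^ (-(1 : ℝ) / 2)) ^ 2 := by
      rw [← sq_abs]; gcongr
    have h3 : (τ ^ (-(1 : ℝ) / 2)) ^ 2 = τ⁻¹ := by
      rw [← Real.rpow_natCast, ← Real.rpow_mul hτ.le, ← Real.rpow_neg_one]; norm_num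
    rw [h3] at h2
    calc τ * (k:ℝ) ^ 2 ≤ τ * τ⁻¹ := by gcongr
      _ = 1 := mul_inv_cancel₀ hτ.ne'
  set S : Finset ℤ := hfin.toFinset with hSd
  have hS : ∀ m ∉ S, u m = 0 := by
    intro m hm
    by_contra hc
    exact hm (by rw [hSd, Set.Finite.mem_toFinset]; exact hc)
  rw [aux_Xd hτ K S hK u hS]
  have hd := aux_dual hτ K S hK1 u hu hq hq8 _ rfl
  set Q : ℝ := ∑ k ∈ K, ∫ θ, Dt τ (θ - ((τ * (k:ℝ) ^ 2 : ℝ) : Torus)) ^ (-(3 / 4) : ℝ) *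
      ‖∑ m ∈ S, fourierCoeff (u m) k * (fourier m θ : ℂ)‖ ^ 2 ∂μT with hQ
  have hQ0 : 0 ≤ Q := by
    refine Finset.sum_nonneg fun k _ => integral_nonneg fun θ => ?_
    have : 0 ≤ Dt τ (θ - ((τ * (k:ℝ) ^ 2 : ℝ) : Torus)) := by
      linarith [Dt_one_le τ (θ - ((τ * (k:ℝ) ^ 2 : ℝ) : Torus))]
    exact mul_nonneg (Real.rpow_nonneg this _) (by positivity)
  set U : ℝ := ∑ m ∈ S, (eLpNorm (u m) (ENNReal.ofReal (4 / 3)) μT).toReal ^ (4 / 3 : ℝ) with hU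
  have hU0 : 0 ≤ U := Finset.sum_nonneg fun m _ => by positivity
  have hl : lpLqNorm τ (4 / 3) (4 / 3) u = (τ * U) ^ (3 / 4 : ℝ) := by
    unfold lpLqNorm
    rw [tsum_eq_sum (s := S)]
    · rw [hU]; norm_num
    · intro m hm
      rw [hS m hm]
      simp
  rw [hl]
  have hy4 : ((τ * U) ^ (3 / 4 : ℝ)) ^ 4 = (τ * U) ^ 3 := by
    rw [← Real.rpow_natCast, ← Real.rpow_mul (by positivity), ← Real.rpow_natCast]
    norm_num
  have hQ2 : Q ^ 2 ≤ C1 * τ * U ^ 3 := by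
    rcases hQ0.eq_or_lt with h | h
    · rw [← h]; simp; positivity
    · have : Q ^ 2 * Q ^ 2 ≤ (C1 * τ * U ^ 3) * Q ^ 2 := by
        rw [hC1]; linarith
      exact le_of_mul_le_mul_right this (by positivity)
  have hC4 : (√√((2 * Real.pi) ^ 2 * C1)) ^ 4 = (2 * Real.pi) ^ 2 * C1 := by
    rw [show 4 = 2 * 2 from rfl, pow_mul, Real.sq_sqrt (by positivity), Real.sq_sqrt (by positivity)]
  apply Real.sqrt_le_iff.2 ⟨by positivity, ?_⟩
  refine (pow_le_pow_iff_left₀ (by positivity) (by positivity) two_ne_zero).1 ?_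
  calc (2 * Real.pi * τ * Q) ^ 2 = (2 * Real.pi) ^ 2 * τ ^ 2 * Q ^ 2 := by ring
    _ ≤ (2 * Real.pi) ^ 2 * τ ^ 2 * (C1 * τ * U ^ 3) := by gcongr
    _ = ((2 * Real.pi) ^ 2 * C1) * (τ * U) ^ 3 := by ring
    _ = (√√((2 * Real.pi) ^ 2 * C1)) ^ 4 * ((τ * U) ^ (3 / 4 : ℝ)) ^ 4 := by rw [hC4, hy4]
    _ = _ := by ring
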